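/- Let X ∈ ℝ^d be an SG_d(σ²) random vector, let k ≤ d, and let U = (u_1,…,u_k) ∈ ℝ^{d×k} be a (possibly random) matrix with orthonormal columns that is independent of X. Then for every t > 0, P( ‖UUᵀX‖² ≥ σ²(k + 2√(kt) + 2t) ) ≤ e^{−t}. -/

import Mathlib

open Matrix MeasureTheory ProbabilityTheory
open scoped BigOperators ENNReal NNReal

noncomputable section

/-- Euclidean norm of a vector in `Fin p → ℝ`. -/
def vnorm {p : ℕ} (x : Fin p → ℝ) : ℝ := Real.sqrt (∑ i, (x i) ^ 2)

/-- Frobenius norm of a real matrix. -/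
def fnorm {m n : ℕ} (A : Matrix (Fin m) (Fin n) ℝ) : ℝ :=
  Real.sqrt (∑ i, ∑ j, (A i j) ^ 2)

/-- Operator (spectral) norm of a real matrix. -/
def opnorm {m n : ℕ} (A : Matrix (Fin m) (Fin n) ℝ) : ℝ :=
  ‖LinearMap.toContinuousLinearMap (Matrix.toEuclideanLin A)‖

/-- A (full) singular value decomposition of a real `p × n` matrix `A`:
`A = U D Vᵀ` with `U, V` orthogonal and `D` the rectangular diagonal matrix with the
nonincreasing nonnegative singular values `sv 0 ≥ sv 1 ≥ ⋯` on the diagonal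
(0-indexed, so the math `σ_i` is `sv (i-1)`), extended by zero beyond `min p n`. -/
structure SVDData (p n : ℕ) (A : Matrix (Fin p) (Fin n) ℝ) where
  U : Matrix (Fin p) (Fin p) ℝ
  V : Matrix (Fin n) (Fin n) ℝ
  sv : ℕ → ℝ
  hU : Uᵀ * U = 1
  hV : Vᵀ * V = 1
  sv_anti : ∀ i j : ℕ, i ≤ j → sv j ≤ sv i
  sv_nonneg : ∀ i, 0 ≤ sv i
  sv_zero : ∀ j, min p n ≤ j → sv j = 0
  decomp : A = U * (Matrix.of fun (i : Fin p) (j : Fin n) => if (i : ℕ) = (j : ℕ) then sv (i : ℕ) else 0) * Vᵀ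

/-- Projection matrix `U_{1:r} U_{1:r}ᵀ` onto the span of the first `r` columns of `U`. -/
def projr {p : ℕ} (U : Matrix (Fin p) (Fin p) ℝ) (r : ℕ) : Matrix (Fin p) (Fin p) ℝ :=
  Matrix.of fun i j => ∑ l : Fin p, if (l : ℕ) < r then U i l * U j l else 0

/-- The `l`-th (0-indexed) column of a matrix, as a vector. -/
def matCol {p q : ℕ} (U : Matrix (Fin p) (Fin q) ℝ) (l : ℕ) : Fin p → ℝ :=
  fun i => if h : l < q then U i ⟨l, h⟩ else 0

/-- `β` for a cluster assignment: `(k/n) ·` (size of the smallest cluster),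
so that `β·n/k` is the size of the smallest cluster. -/
def betaMin (n k : ℕ) (z : Fin n → Fin k) : ℝ :=
  ((k : ℝ) / n) * ⨅ a : Fin k, ((Finset.univ.filter fun i => z i = a).card : ℝ)

/-- Minimum pairwise distance between the centers. -/
def Delta {p k : ℕ} (θ : Fin k → Fin p → ℝ) : ℝ :=
  ⨅ q : {q : Fin k × Fin k // q.1 ≠ q.2}, vnorm (fun i => θ q.1.1 i - θ q.1.2 i)

/-- Misclustering error `ℓ(z, z*)`. -/
def miscl {n k : ℕ} (z zs : Fin n → Fin k) : ℝ :=
  (⨅ φ : Equiv.Perm (Fin k), ((Finset.univ.filter fun i => z i ≠ φ (zs i)).card : ℝ)) / n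

/-- `(z, c)` is a global minimizer of the k-means objective for the columns of `W * X`. -/
def IsKMeans {p n k : ℕ} (W : Matrix (Fin p) (Fin p) ℝ) (X : Matrix (Fin p) (Fin n) ℝ)
    (z : Fin n → Fin k) (c : Fin k → Fin p → ℝ) : Prop :=
  ∀ (z' : Fin n → Fin k) (c' : Fin k → Fin p → ℝ),
    ∑ i, ∑ a, (W.mulVec (fun b => X b i) a - c (z i) a) ^ 2 ≤
      ∑ i, ∑ a, (W.mulVec (fun b => X b i) a - c' (z' i) a) ^ 2

/-- Scalar sub-Gaussian with variance proxy `σ2`: the moment generating function of `X`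
exists and satisfies `E exp(tX) ≤ exp(σ2 t²/2)` for all `t`. -/
def IsSG {Ω : Type*} [MeasurableSpace Ω] (μ : Measure Ω) (X : Ω → ℝ) (σ2 : ℝ) : Prop :=
  ∀ t : ℝ, Integrable (fun ω => Real.exp (t * X ω)) μ ∧
    ∫ ω, Real.exp (t * X ω) ∂μ ≤ Real.exp (σ2 * t ^ 2 / 2)

/-- Vector sub-Gaussian with variance proxy `σ2`: every unit-vector projection is `SG(σ2)`. -/
def IsSGVec {Ω : Type*} [MeasurableSpace Ω] (μ : Measure Ω) {p : ℕ}
    (X : Ω → Fin p → ℝ) (σ2 : ℝ) : Prop :=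
  ∀ u : Fin p → ℝ, vnorm u = 1 → IsSG μ (fun ω => ∑ i, u i * X ω i) σ2

/-!
For `U` independent of `X`, conditioning on `U` shows that `Uᵀ X` is again a sub-Gaussian vector,
now in `ℝ^k`, with the same variance proxy: in the direction `u` it is `⟨U u, X⟩` and
`‖U u‖ ≤ ‖u‖`. Moreover `‖U Uᵀ X‖ ≤ ‖Uᵀ X‖`, so it is enough to bound the norm of a sub-Gaussian
vector `Y` of `ℝ^k`. Its square is linearised by an independent Gaussian vector `g` with covariance
`v I`: averaging over `g` first, `E exp ⟨g, Y⟩ = E exp (v ‖Y‖² / 2)`, while averaging over `Y`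
first, `E exp ⟨g, Y⟩ ≤ E exp (σ² ‖g‖² / 2) = (1 - σ² v) ^ (-k / 2)`. The Chernoff bound, optimised
in `v`, gives the tail.
-/

section DotProduct

variable {α ι : Type*} [MeasurableSpace α] [Fintype ι] {f g : α → ι → ℝ}

@[fun_prop]
lemma measurable_dotProduct (hf : Measurable f) (hg : Measurable g) :
    Measurable fun a ↦ f a ⬝ᵥ g a := by
  unfold dotProduct
  fun_prop

@[fun_prop]
lemma aemeasurable_dotProduct {μ : Measure α} (hf : AEMeasurable f μ) (hg : AEMeasurable g μ) :
    AEMeasurable (fun a ↦ f a ⬝ᵥ g a) μ := by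
  unfold dotProduct
  fun_prop

end DotProduct

section GaussianIntegrals

variable {ι : Type*} [Fintype ι]

lemma lintegral_exp_sum_pi {α : ι → Type*} [∀ i, MeasurableSpace (α i)]
    (ν : ∀ i, Measure (α i)) [∀ i, IsProbabilityMeasure (ν i)] {f : ∀ i, α i → ℝ}
    (hf : ∀ i, Measurable (f i)) :
    ∫⁻ g, ENNReal.ofReal (Real.exp (∑ i, f i (g i))) ∂(Measure.pi ν) =
      ∏ i, ∫⁻ x, ENNReal.ofReal (Real.exp (f i x)) ∂(ν i) := by
  have hexp (i : ι) : Measurable fun x ↦ ENNReal.ofReal (Real.exp (f i x)) := by fun_prop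
  simp_rw [Real.exp_sum, ENNReal.ofReal_prod_of_nonneg fun _ _ ↦ (Real.exp_pos _).le]
  rw [lintegral_prod_eq_prod_lintegral_of_indepFun Finset.univ _
    (iIndepFun_pi fun i ↦ (hexp i).aemeasurable) (by fun_prop)]
  exact Finset.prod_congr rfl fun i _ ↦ (measurePreserving_eval ν i).lintegral_comp (hexp i)

lemma lintegral_exp_mul_gaussianReal (m : ℝ) (v : ℝ≥0) (y : ℝ) :
    ∫⁻ x, ENNReal.ofReal (Real.exp (y * x)) ∂(gaussianReal m v) =
      ENNReal.ofReal (Real.exp (m * y + v * y ^ 2 / 2)) := by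
  rw [← ofReal_integral_eq_lintegral_ofReal (integrable_exp_mul_gaussianReal y)
    (.of_forall fun _ ↦ (Real.exp_pos _).le)]
  exact congrArg ENNReal.ofReal (congrFun mgf_fun_id_gaussianReal y)

lemma lintegral_exp_mul_sq_gaussianReal {v : ℝ≥0} {c : ℝ} (hcv : c * v < 1) :
    ∫⁻ x, ENNReal.ofReal (Real.exp (c * x ^ 2 / 2)) ∂(gaussianReal 0 v) =
      ENNReal.ofReal (√(1 - c * v))⁻¹ := by
  rcases eq_or_ne v 0 with rfl | hv
  · simp [gaussianReal_zero_var]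
  have hb : 0 < (1 - c * v) / (2 * v) := div_pos (by linarith) (by positivity)
  have density_mul (x : ℝ) : gaussianPDF 0 v x * ENNReal.ofReal (Real.exp (c * x ^ 2 / 2)) =
      ENNReal.ofReal ((√(2 * Real.pi * v))⁻¹ * Real.exp (-((1 - c * v) / (2 * v)) * x ^ 2)) := by
    rw [gaussianPDF, ← ENNReal.ofReal_mul (gaussianPDFReal_nonneg _ _ _), gaussianPDFReal,
      mul_assoc, ← Real.exp_add]
    congr 3
    field_simp
    ring
  rw [gaussianReal_of_var_ne_zero _ hv,
    lintegral_withDensity_eq_lintegral_mul _ (measurable_gaussianPDF _ _) (by fun_prop)]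
  simp only [Pi.mul_apply, density_mul]
  rw [← ofReal_integral_eq_lintegral_ofReal ((integrable_exp_neg_mul_sq hb).const_mul _)
      (.of_forall fun _ ↦ by positivity),
    integral_const_mul, integral_gaussian, ← Real.sqrt_inv, ← Real.sqrt_inv,
    ← Real.sqrt_mul (by positivity)]
  congr 2
  have : 1 - c * v ≠ 0 := by linarith
  field_simp

lemma lintegral_exp_dotProduct_pi_gaussianReal (v : ℝ≥0) (y : ι → ℝ) :
    ∫⁻ g, ENNReal.ofReal (Real.exp (y ⬝ᵥ g)) ∂(Measure.pi fun _ ↦ gaussianReal 0 v) =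
      ENNReal.ofReal (Real.exp (v * (y ⬝ᵥ y) / 2)) := by
  simp only [dotProduct]
  rw [lintegral_exp_sum_pi _ (f := fun i x ↦ y i * x) (by fun_prop)]
  simp_rw [lintegral_exp_mul_gaussianReal]
  rw [← ENNReal.ofReal_prod_of_nonneg fun _ _ ↦ (Real.exp_pos _).le, ← Real.exp_sum,
    Finset.mul_sum, Finset.sum_div]
  simp only [zero_mul, zero_add, sq]

lemma lintegral_exp_mul_dotProduct_self_pi_gaussianReal {v : ℝ≥0} {c : ℝ} (hcv : c * v < 1) :
    ∫⁻ g : ι → ℝ, ENNReal.ofReal (Real.exp (c * (g ⬝ᵥ g) / 2))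
        ∂(Measure.pi fun _ ↦ gaussianReal 0 v) =
      ENNReal.ofReal ((√(1 - c * v))⁻¹ ^ Fintype.card ι) := by
  simp only [dotProduct, Finset.mul_sum, Finset.sum_div, ← sq]
  rw [lintegral_exp_sum_pi _ (f := fun _ x ↦ c * x ^ 2 / 2) (by fun_prop)]
  simp_rw [lintegral_exp_mul_sq_gaussianReal hcv]
  rw [Finset.prod_const, Finset.card_univ, ENNReal.ofReal_pow (by positivity)]

end GaussianIntegrals

section EuclideanNorm

variable {p q : ℕ}

lemma vnorm_eq_norm_toLp (x : Fin p → ℝ) : vnorm x = ‖WithLp.toLp 2 x‖ := by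
  simp [vnorm, EuclideanSpace.norm_eq]

lemma vnorm_nonneg (x : Fin p → ℝ) : 0 ≤ vnorm x := Real.sqrt_nonneg _

lemma vnorm_sq (x : Fin p → ℝ) : vnorm x ^ 2 = x ⬝ᵥ x := by
  rw [vnorm, Real.sq_sqrt (Finset.sum_nonneg fun _ _ ↦ sq_nonneg _)]
  simp only [dotProduct, sq]

lemma vnorm_smul (c : ℝ) (x : Fin p → ℝ) : vnorm (c • x) = |c| * vnorm x := by
  rw [vnorm_eq_norm_toLp, vnorm_eq_norm_toLp, WithLp.toLp_smul, norm_smul, Real.norm_eq_abs]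

lemma vnorm_eq_zero {x : Fin p → ℝ} : vnorm x = 0 ↔ x = 0 := by
  rw [vnorm_eq_norm_toLp, norm_eq_zero, WithLp.toLp_eq_zero]

lemma vnorm_mulVec_of_transpose_mul_self_eq_one {A : Matrix (Fin p) (Fin q) ℝ} (hA : Aᵀ * A = 1)
    (y : Fin q → ℝ) : vnorm (A *ᵥ y) = vnorm y := by
  rw [← sq_eq_sq₀ (vnorm_nonneg _) (vnorm_nonneg _), vnorm_sq, vnorm_sq, dotProduct_mulVec,
    vecMul_mulVec, hA, vecMul_one]

end EuclideanNorm

section SubGaussian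

variable {Ω : Type*} [MeasurableSpace Ω] {μ : Measure Ω} {p : ℕ} {σ2 : ℝ}

lemma isSG_iff_lintegral_exp_le {Z : Ω → ℝ} (hZ : AEMeasurable Z μ) :
    IsSG μ Z σ2 ↔ ∀ t : ℝ, ∫⁻ ω, ENNReal.ofReal (Real.exp (t * Z ω)) ∂μ ≤
      ENNReal.ofReal (Real.exp (σ2 * t ^ 2 / 2)) := by
  refine forall_congr' fun t ↦ ?_
  have hnonneg : 0 ≤ᵐ[μ] fun ω ↦ Real.exp (t * Z ω) := .of_forall fun _ ↦ (Real.exp_pos _).le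
  have hmeas : AEStronglyMeasurable (fun ω ↦ Real.exp (t * Z ω)) μ := by fun_prop
  constructor
  · rintro ⟨hint, hle⟩
    rw [← ofReal_integral_eq_lintegral_ofReal hint hnonneg]
    exact ENNReal.ofReal_le_ofReal hle
  · intro hle
    have hint : Integrable (fun ω ↦ Real.exp (t * Z ω)) μ :=
      (lintegral_ofReal_ne_top_iff_integrable hmeas hnonneg).1
        (hle.trans_lt ENNReal.ofReal_lt_top).ne
    rw [← ofReal_integral_eq_lintegral_ofReal hint hnonneg] at hle
    exact ⟨hint, (ENNReal.ofReal_le_ofReal_iff (Real.exp_pos _).le).1 hle⟩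

lemma IsSG.aemeasurable {Z : Ω → ℝ} (hZ : IsSG μ Z σ2) : AEMeasurable Z μ :=
  Real.aemeasurable_of_aemeasurable_exp_mul one_ne_zero (hZ 1).1.aemeasurable

lemma IsSGVec.aemeasurable {X : Ω → Fin p → ℝ} (hX : IsSGVec μ X σ2) : AEMeasurable X μ := by
  refine aemeasurable_pi_iff.2 fun i ↦ ?_
  have hunit : vnorm (Pi.single i (1 : ℝ)) = 1 := by simp [vnorm_eq_norm_toLp]
  simpa [Pi.single_apply] using (hX _ hunit).aemeasurable

lemma IsSGVec.lintegral_exp_dotProduct_le [IsProbabilityMeasure μ] {X : Ω → Fin p → ℝ}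
    (hX : IsSGVec μ X σ2) (v : Fin p → ℝ) :
    ∫⁻ ω, ENNReal.ofReal (Real.exp (v ⬝ᵥ X ω)) ∂μ ≤
      ENNReal.ofReal (Real.exp (σ2 * (v ⬝ᵥ v) / 2)) := by
  rcases eq_or_ne v 0 with rfl | hv
  · simp
  have hr : vnorm v ≠ 0 := vnorm_eq_zero.not.2 hv
  have hunit : vnorm ((vnorm v)⁻¹ • v) = 1 := by
    rw [vnorm_smul, abs_of_nonneg (inv_nonneg.2 (vnorm_nonneg v)), inv_mul_cancel₀ hr]
  have hscale (ω : Ω) : vnorm v * (((vnorm v)⁻¹ • v) ⬝ᵥ X ω) = v ⬝ᵥ X ω := by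
    rw [smul_dotProduct, smul_eq_mul, mul_inv_cancel_left₀ hr]
  have hdir : IsSG μ (fun ω ↦ ((vnorm v)⁻¹ • v) ⬝ᵥ X ω) σ2 := hX _ hunit
  simpa only [hscale, vnorm_sq] using (isSG_iff_lintegral_exp_le hdir.aemeasurable).1 hdir (vnorm v)

lemma IsSGVec.lintegral_exp_dotProduct_le_of_indepFun [IsProbabilityMeasure μ]
    {X V : Ω → Fin p → ℝ} (hX : IsSGVec μ X σ2) (hV : AEMeasurable V μ) (hVX : IndepFun V X μ) :
    ∫⁻ ω, ENNReal.ofReal (Real.exp (V ω ⬝ᵥ X ω)) ∂μ ≤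
      ∫⁻ ω, ENNReal.ofReal (Real.exp (σ2 * (V ω ⬝ᵥ V ω) / 2)) ∂μ := by
  have hmeas : Measurable fun z : (Fin p → ℝ) × (Fin p → ℝ) ↦
      ENNReal.ofReal (Real.exp (z.1 ⬝ᵥ z.2)) := by fun_prop
  have hXm := hX.aemeasurable
  calc ∫⁻ ω, ENNReal.ofReal (Real.exp (V ω ⬝ᵥ X ω)) ∂μ
    _ = ∫⁻ z, ENNReal.ofReal (Real.exp (z.1 ⬝ᵥ z.2)) ∂((μ.map V).prod (μ.map X)) := by
      rw [← hVX.map_prod_eq_prod_map_map hV hXm, lintegral_map' hmeas.aemeasurable (hV.prodMk hXm)]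
    _ = ∫⁻ v, ∫⁻ ω, ENNReal.ofReal (Real.exp (v ⬝ᵥ X ω)) ∂μ ∂(μ.map V) := by
      rw [lintegral_prod _ hmeas.aemeasurable]
      exact lintegral_congr fun v ↦
        lintegral_map' (hmeas.comp measurable_prodMk_left).aemeasurable hXm
    _ ≤ ∫⁻ v, ENNReal.ofReal (Real.exp (σ2 * (v ⬝ᵥ v) / 2)) ∂(μ.map V) :=
      lintegral_mono hX.lintegral_exp_dotProduct_le
    _ = ∫⁻ ω, ENNReal.ofReal (Real.exp (σ2 * (V ω ⬝ᵥ V ω) / 2)) ∂μ :=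
      lintegral_map' (by fun_prop) hV

lemma IsSGVec.transpose_mulVec_of_indepFun [IsProbabilityMeasure μ] {q : ℕ} {X : Ω → Fin p → ℝ}
    (hX : IsSGVec μ X σ2) (hσ2 : 0 ≤ σ2) {U : Ω → Fin p → Fin q → ℝ} (hU : AEMeasurable U μ)
    (hUle : ∀ᵐ ω ∂μ, ∀ y, vnorm (of (U ω) *ᵥ y) ≤ vnorm y) (hUX : IndepFun U X μ) :
    IsSGVec μ (fun ω ↦ (of (U ω))ᵀ *ᵥ X ω) σ2 := by
  intro u hu
  have hXm := hX.aemeasurable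
  have hmeas : AEMeasurable (fun ω ↦ u ⬝ᵥ (of (U ω))ᵀ *ᵥ X ω) μ := by
    unfold mulVec
    simp only [transpose_apply, of_apply]
    fun_prop
  refine (isSG_iff_lintegral_exp_le hmeas).2 fun t ↦ ?_
  have hdir : Measurable fun A : Fin p → Fin q → ℝ ↦ of A *ᵥ (t • u) := by
    unfold mulVec
    fun_prop
  have hadj (ω : Ω) : t * (u ⬝ᵥ (of (U ω))ᵀ *ᵥ X ω) = (of (U ω) *ᵥ (t • u)) ⬝ᵥ X ω := by
    rw [dotProduct_mulVec, vecMul_transpose, mulVec_smul, smul_dotProduct, smul_eq_mul]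
  have hdir_sq : ∀ᵐ ω ∂μ, (of (U ω) *ᵥ (t • u)) ⬝ᵥ (of (U ω) *ᵥ (t • u)) ≤ t ^ 2 := by
    filter_upwards [hUle] with ω hω
    calc (of (U ω) *ᵥ (t • u)) ⬝ᵥ (of (U ω) *ᵥ (t • u))
      _ = vnorm (of (U ω) *ᵥ (t • u)) ^ 2 := (vnorm_sq _).symm
      _ ≤ vnorm (t • u) ^ 2 := pow_le_pow_left₀ (vnorm_nonneg _) (hω _) 2
      _ = t ^ 2 := by rw [vnorm_smul, hu, mul_one, sq_abs]
  calc ∫⁻ ω, ENNReal.ofReal (Real.exp (t * (u ⬝ᵥ (of (U ω))ᵀ *ᵥ X ω))) ∂μ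
    _ = ∫⁻ ω, ENNReal.ofReal (Real.exp ((of (U ω) *ᵥ (t • u)) ⬝ᵥ X ω)) ∂μ := by simp only [hadj]
    _ ≤ ∫⁻ ω, ENNReal.ofReal (Real.exp
          (σ2 * ((of (U ω) *ᵥ (t • u)) ⬝ᵥ (of (U ω) *ᵥ (t • u))) / 2)) ∂μ :=
      hX.lintegral_exp_dotProduct_le_of_indepFun (hdir.comp_aemeasurable hU)
        (hUX.comp hdir measurable_id)
    _ ≤ ∫⁻ _, ENNReal.ofReal (Real.exp (σ2 * t ^ 2 / 2)) ∂μ :=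
      lintegral_mono_ae (hdir_sq.mono fun ω hω ↦ by gcongr)
    _ = ENNReal.ofReal (Real.exp (σ2 * t ^ 2 / 2)) := by simp

lemma IsSGVec.lintegral_exp_mul_dotProduct_self_le [IsProbabilityMeasure μ] {X : Ω → Fin p → ℝ}
    (hX : IsSGVec μ X σ2) {v : ℝ≥0} (hv : σ2 * v < 1) :
    ∫⁻ ω, ENNReal.ofReal (Real.exp (v / 2 * (X ω ⬝ᵥ X ω))) ∂μ ≤
      ENNReal.ofReal ((√(1 - σ2 * v))⁻¹ ^ p) := by
  have hmeas : AEMeasurable (fun z : Ω × (Fin p → ℝ) ↦ ENNReal.ofReal (Real.exp (X z.1 ⬝ᵥ z.2)))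
      (μ.prod (Measure.pi fun _ ↦ gaussianReal 0 v)) :=
    (aemeasurable_dotProduct hX.aemeasurable.comp_fst
      measurable_snd.aemeasurable).exp.ennreal_ofReal
  calc ∫⁻ ω, ENNReal.ofReal (Real.exp (v / 2 * (X ω ⬝ᵥ X ω))) ∂μ
    _ = ∫⁻ ω, ∫⁻ g, ENNReal.ofReal (Real.exp (X ω ⬝ᵥ g))
          ∂(Measure.pi fun _ ↦ gaussianReal 0 v) ∂μ := by
      simp only [lintegral_exp_dotProduct_pi_gaussianReal, div_mul_eq_mul_div]
    _ = ∫⁻ g, ∫⁻ ω, ENNReal.ofReal (Real.exp (g ⬝ᵥ X ω))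
          ∂μ ∂(Measure.pi fun _ ↦ gaussianReal 0 v) := by
      rw [lintegral_lintegral_swap hmeas]
      simp only [dotProduct_comm]
    _ ≤ ∫⁻ g, ENNReal.ofReal (Real.exp (σ2 * (g ⬝ᵥ g) / 2))
          ∂(Measure.pi fun _ ↦ gaussianReal 0 v) :=
      lintegral_mono hX.lintegral_exp_dotProduct_le
    _ = ENNReal.ofReal ((√(1 - σ2 * v))⁻¹ ^ p) := by
      rw [lintegral_exp_mul_dotProduct_self_pi_gaussianReal hv, Fintype.card_fin]

end SubGaussian

section Tail

variable {Ω : Type*} [MeasurableSpace Ω] {μ : Measure Ω}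

lemma measure_ge_le_exp_mul_lintegral_exp {Z : Ω → ℝ} (hZ : AEMeasurable Z μ) {l : ℝ} (hl : 0 ≤ l)
    (ε : ℝ) :
    μ {ω | ε ≤ Z ω} ≤
      ENNReal.ofReal (Real.exp (-l * ε)) * ∫⁻ ω, ENNReal.ofReal (Real.exp (l * Z ω)) ∂μ := by
  calc μ {ω | ε ≤ Z ω}
    _ ≤ μ {ω | ENNReal.ofReal (Real.exp (l * ε)) ≤ ENNReal.ofReal (Real.exp (l * Z ω))} :=
      measure_mono fun ω (hω : ε ≤ Z ω) ↦ ENNReal.ofReal_le_ofReal (by gcongr)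
    _ ≤ (∫⁻ ω, ENNReal.ofReal (Real.exp (l * Z ω)) ∂μ) / ENNReal.ofReal (Real.exp (l * ε)) :=
      meas_ge_le_lintegral_div (by fun_prop) (by simp [Real.exp_pos]) ENNReal.ofReal_ne_top
    _ = _ := by
      rw [ENNReal.div_eq_inv_mul, ← ENNReal.ofReal_inv_of_pos (Real.exp_pos _), ← Real.exp_neg,
        neg_mul]

lemma sqrt_one_add_two_mul_add_two_mul_sq_le_exp {u : ℝ} (hu : 0 ≤ u) :
    √(1 + 2 * u + 2 * u ^ 2) ≤ Real.exp u := by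
  rw [Real.sqrt_le_left (Real.exp_pos _).le, ← Real.exp_nat_mul]
  calc 1 + 2 * u + 2 * u ^ 2
    _ = 1 + 2 * u + (2 * u) ^ 2 / 2 := by ring
    _ ≤ Real.exp (2 * u) := Real.quadratic_le_exp_of_nonneg (by positivity)
    _ = Real.exp ((2 : ℕ) * u) := by norm_num

lemma sqrt_div_pow_le_exp_sqrt_mul {k : ℕ} (hk : 0 < k) {t : ℝ} (ht : 0 ≤ t) :
    √((k + 2 * √(k * t) + 2 * t) / k) ^ k ≤ Real.exp √(k * t) := by
  have hk' : (0 : ℝ) < k := Nat.cast_pos.2 hk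
  have hsq : √(k * t) ^ 2 = k * t := Real.sq_sqrt (by positivity)
  have hratio : (k + 2 * √(k * t) + 2 * t) / k =
      1 + 2 * (√(k * t) / k) + 2 * (√(k * t) / k) ^ 2 := by
    rw [div_pow, hsq]
    field_simp
  calc √((k + 2 * √(k * t) + 2 * t) / k) ^ k
    _ ≤ Real.exp (√(k * t) / k) ^ k := by
      rw [hratio]
      gcongr
      exact sqrt_one_add_two_mul_add_two_mul_sq_le_exp (by positivity)
    _ = Real.exp √(k * t) := by rw [← Real.exp_nat_mul, mul_div_cancel₀ _ hk'.ne']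

lemma IsSGVec.measure_vnorm_sq_ge_le_exp_mul [IsProbabilityMeasure μ] {p : ℕ} {σ2 : ℝ}
    {X : Ω → Fin p → ℝ} (hX : IsSGVec μ X σ2) {v : ℝ≥0} (hv : σ2 * v < 1) (ε : ℝ) :
    μ {ω | ε ≤ vnorm (X ω) ^ 2} ≤
      ENNReal.ofReal (Real.exp (-(v / 2) * ε) * (√(1 - σ2 * v))⁻¹ ^ p) := by
  have hXm := hX.aemeasurable
  simp only [vnorm_sq]
  rw [ENNReal.ofReal_mul (Real.exp_pos _).le]
  calc μ {ω | ε ≤ X ω ⬝ᵥ X ω}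
    _ ≤ ENNReal.ofReal (Real.exp (-(v / 2) * ε)) *
          ∫⁻ ω, ENNReal.ofReal (Real.exp (v / 2 * (X ω ⬝ᵥ X ω))) ∂μ :=
      measure_ge_le_exp_mul_lintegral_exp (by fun_prop) (by positivity) ε
    _ ≤ _ := by
      gcongr
      exact hX.lintegral_exp_mul_dotProduct_self_le hv

theorem IsSGVec.measure_vnorm_sq_ge_le [IsProbabilityMeasure μ] {k : ℕ} {σ2 : ℝ} (hσ2 : 0 < σ2)
    {X : Ω → Fin k → ℝ} (hX : IsSGVec μ X σ2) {t : ℝ} (ht : 0 < t) :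
    μ {ω | σ2 * (k + 2 * √(k * t) + 2 * t) ≤ vnorm (X ω) ^ 2} ≤
      ENNReal.ofReal (Real.exp (-t)) := by
  rcases k.eq_zero_or_pos with rfl | hk
  · have hpos : 0 < σ2 * (2 * t) := by positivity
    simp [vnorm, hpos.not_ge]
  have hk' : (0 : ℝ) < k := Nat.cast_pos.2 hk
  set x : ℝ := k + 2 * √(k * t) + 2 * t with hx
  have hkx : k ≤ x := by linarith [Real.sqrt_nonneg (k * t)]
  have hx_pos : 0 < x := hk'.trans_le hkx
  -- `σ2 * v = 1 - k / x` minimises `exp (-(v / 2) * (σ2 * x)) * (1 - σ2 * v) ^ (-k / 2)`.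
  obtain ⟨v, hv⟩ : ∃ v : ℝ≥0, σ2 * v = 1 - k / x :=
    ⟨⟨(1 - k / x) / σ2, div_nonneg (sub_nonneg.2 ((div_le_one hx_pos).2 hkx)) hσ2.le⟩,
      mul_div_cancel₀ _ hσ2.ne'⟩
  have hv_lt : σ2 * v < 1 := by
    rw [hv, sub_lt_self_iff]
    positivity
  have hexponent : -(v / 2) * (σ2 * x) = -(√(k * t) + t) := by
    calc -(v / 2) * (σ2 * x)
      _ = -(σ2 * v * x) / 2 := by ring
      _ = -(x - k) / 2 := by rw [hv, sub_mul, one_mul, div_mul_cancel₀ _ hx_pos.ne']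
      _ = -(√(k * t) + t) := by rw [hx]; ring
  have hfactor : (√(1 - σ2 * v))⁻¹ ^ k ≤ Real.exp √(k * t) := by
    rw [hv, sub_sub_cancel, ← Real.sqrt_inv, inv_div]
    exact sqrt_div_pow_le_exp_sqrt_mul hk ht.le
  refine (hX.measure_vnorm_sq_ge_le_exp_mul hv_lt _).trans (ENNReal.ofReal_le_ofReal ?_)
  calc Real.exp (-(v / 2) * (σ2 * x)) * (√(1 - σ2 * v))⁻¹ ^ k
    _ ≤ Real.exp (-(√(k * t) + t)) * Real.exp √(k * t) := by rw [hexponent]; gcongr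
    _ = Real.exp (-t) := by rw [← Real.exp_add]; ring_nf

end Tail

theorem subgaussian_projection_tail_general {Ω : Type*} [MeasurableSpace Ω] {μ : Measure Ω}
    [IsProbabilityMeasure μ] {d k : ℕ} {σ2 : ℝ} (hσ2 : 0 < σ2) {X : Ω → Fin d → ℝ}
    (hX : IsSGVec μ X σ2) {U : Ω → Fin d → Fin k → ℝ} (hU : AEMeasurable U μ)
    (hUle : ∀ᵐ ω ∂μ, ∀ y, vnorm (of (U ω) *ᵥ y) ≤ vnorm y) (hUX : IndepFun U X μ)
    {t : ℝ} (ht : 0 < t) :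
    μ {ω | σ2 * (k + 2 * √(k * t) + 2 * t) ≤ vnorm ((of (U ω) * (of (U ω))ᵀ) *ᵥ X ω) ^ 2} ≤
      ENNReal.ofReal (Real.exp (-t)) := by
  refine (measure_mono_ae ?_).trans
    ((hX.transpose_mulVec_of_indepFun hσ2.le hU hUle hUX).measure_vnorm_sq_ge_le hσ2 ht)
  filter_upwards [hUle] with ω hω hlarge
  refine le_trans hlarge (pow_le_pow_left₀ (vnorm_nonneg _) ?_ 2)
  rw [← mulVec_mulVec]
  exact hω _

/-- **Lemma 7 (projection of a sub-Gaussian vector).**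
Let `X ∈ ℝ^d` be `SG_d(σ²)`, `k ≤ d`, and let `U ∈ ℝ^{d×k}` have orthonormal columns, be
random, and be independent of `X`.  Then for every `t > 0`,
`P(‖UUᵀX‖² ≥ σ²(k + 2√(kt) + 2t)) ≤ e^{−t}`. -/
theorem subgaussian_projection_tail
    (Ω : Type) [MeasurableSpace Ω] (μ : Measure Ω) [IsProbabilityMeasure μ]
    (d k : ℕ) (hk : k ≤ d) (σ2 : ℝ) (hσ2 : 0 < σ2)
    (X : Ω → Fin d → ℝ) (hXmeas : Measurable X) (hsg : IsSGVec μ X σ2)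
    (U : Ω → Fin d → Fin k → ℝ) (hUmeas : Measurable U)
    (horth : ∀ ω, (Matrix.of (U ω))ᵀ * Matrix.of (U ω) = 1)
    (hindep : IndepFun U X μ)
    (t : ℝ) (ht : 0 < t) :
    μ {ω | σ2 * ((k : ℝ) + 2 * Real.sqrt ((k : ℝ) * t) + 2 * t) ≤
        vnorm ((Matrix.of (U ω) * (Matrix.of (U ω))ᵀ).mulVec (X ω)) ^ 2} ≤
      ENNReal.ofReal (Real.exp (-t)) :=
  subgaussian_projection_tail_general hσ2 hsg hUmeas.aemeasurable (.of_forall fun ω y ↦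
    (vnorm_mulVec_of_transpose_mul_self_eq_one (horth ω) y).le) hindep ht
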